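/- For every d ≥ √2 and all real angles α, β, there exists a bounded-curvature path from configuration (0,0,α) to (d,0,β) of length at most d + 5π/2 − √2. -/

import Mathlib

open Real

/-- A bounded-curvature path of length `T ≥ 0` from configuration `(x₀, y₀, α)`
to configuration `(x₁, y₁, β)`: a map `γ : ℝ → ℝ²` (Euclidean plane) that is
continuously differentiable on `[0, T]` with unit-speed derivative `γ'`, whose
derivative is `1`-Lipschitz on `[0, T]` (curvature bound `≤ 1`), starting at
`(x₀, y₀)` with direction `(cos α, sin α)` and ending at `(x₁, y₁)` with
direction `(cos β, sin β)`. -/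
def IsBCPath (T x₀ y₀ α x₁ y₁ β : ℝ) (γ : ℝ → EuclideanSpace ℝ (Fin 2)) : Prop :=
  0 ≤ T ∧
  ∃ γ' : ℝ → EuclideanSpace ℝ (Fin 2),
    (∀ t ∈ Set.Icc (0:ℝ) T, HasDerivWithinAt γ (γ' t) (Set.Icc 0 T) t) ∧
    ContinuousOn γ' (Set.Icc 0 T) ∧
    (∀ t ∈ Set.Icc (0:ℝ) T, ‖γ' t‖ = 1) ∧
    LipschitzOnWith 1 γ' (Set.Icc 0 T) ∧
    γ 0 = ![x₀, y₀] ∧ γ' 0 = ![Real.cos α, Real.sin α] ∧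
    γ T = ![x₁, y₁] ∧ γ' T = ![Real.cos β, Real.sin β]

/-!
Integrating a `1`-Lipschitz heading gives a bounded-curvature path. Write the end headings as
`μ - η` and `μ + η`; reflecting in the `x`-axis and reversing the path reduce everything to
`0 ≤ μ ≤ π` and `0 ≤ η ≤ π / 2`.

If `2 sin² η ≤ |d sin (μ - η)|`, turning, going straight and turning the same way again takes at
most `d + 2π`. Otherwise consider the unit circle on the left of the initial configuration and the
one on the right of the final configuration. If they do not overlap, follow their inner tangent,
with an extra full turn if its heading `h` lies between `μ - η` and `μ + η`. This takes at most
`d + 2π` unless `μ < h ≤ μ + η`. In that range a tangent of fixed heading lengthens with `d` at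
rate `cos h ≤ 1`, which reduces the bound to `d = √2`, provided the circles would not overlap at
that distance either. In all remaining cases the mirror image of this construction applies, or three
arcs of alternating direction suffice, with total length at most `5π / 2`.
-/

lemma hasDerivAt_toLp_vec_two {f g : ℝ → ℝ} {f' g' t : ℝ} (hf : HasDerivAt f f' t)
    (hg : HasDerivAt g g' t) :
    HasDerivAt (fun t => !₂[f t, g t]) !₂[f', g'] t := by
  have hvec : HasDerivAt (fun t => ![f t, g t]) ![f', g'] t := by
    rw [hasDerivAt_pi, Fin.forall_fin_two]
    exact ⟨hf, hg⟩
  exact (PiLp.continuousLinearEquiv 2 ℝ fun _ : Fin 2 => ℝ).symm.toContinuousLinearMap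
    |>.hasFDerivAt.comp_hasDerivAt t hvec

lemma norm_cos_sin_eq_one (a : ℝ) : ‖!₂[cos a, sin a]‖ = 1 := by
  simp [EuclideanSpace.norm_eq]

lemma lipschitzWith_cos_sin : LipschitzWith 1 fun a : ℝ => !₂[cos a, sin a] := by
  refine LipschitzWith.of_dist_le_mul fun a b => ?_
  have chord_sq : (cos a - cos b) ^ 2 + (sin a - sin b) ^ 2 = 2 - 2 * cos (a - b) := by
    rw [cos_sub]
    linear_combination sin_sq_add_cos_sq a + sin_sq_add_cos_sq b
  rw [EuclideanSpace.dist_eq, NNReal.coe_one, one_mul]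
  refine Real.sqrt_le_iff.mpr ⟨dist_nonneg, ?_⟩
  simp only [Fin.sum_univ_two, Real.dist_eq, sq_abs, Matrix.cons_val_zero, Matrix.cons_val_one]
  linarith [one_sub_sq_div_two_le_cos (x := a - b)]

/-- `Steerable T α β x y`: a unit-speed point can move for time `T` so that its heading turns from
`α` to `β` at angular speed at most `1` and its displacement is `(x, y)`. The heading is given by a
real lift `θ`, defined and Lipschitz on all of `ℝ`; only its end values are taken modulo `2π`. -/
def Steerable (T : ℝ) (α β : Angle) (x y : ℝ) : Prop :=
  0 ≤ T ∧ ∃ θ : ℝ → ℝ, LipschitzWith 1 θ ∧ (θ 0 : Angle) = α ∧ (θ T : Angle) = β ∧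
    ∫ t in 0..T, cos (θ t) = x ∧ ∫ t in 0..T, sin (θ t) = y

lemma Steerable.exists_isBCPath {T α β x y : ℝ} (h : Steerable T α β x y) (x₀ y₀ : ℝ) :
    ∃ γ : ℝ → EuclideanSpace ℝ (Fin 2), IsBCPath T x₀ y₀ α (x₀ + x) (y₀ + y) β γ := by
  obtain ⟨hT, θ, hθ, h0, hT', rfl, rfl⟩ := h
  have hcos : Continuous fun t => cos (θ t) := continuous_cos.comp hθ.continuous
  have hsin : Continuous fun t => sin (θ t) := continuous_sin.comp hθ.continuous
  have hdir : LipschitzWith 1 fun t => !₂[cos (θ t), sin (θ t)] := by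
    simpa [Function.comp_def] using lipschitzWith_cos_sin.comp hθ
  refine ⟨fun t => !₂[x₀ + ∫ u in 0..t, cos (θ u), y₀ + ∫ u in 0..t, sin (θ u)], hT,
    fun t => !₂[cos (θ t), sin (θ t)], fun t _ => ?_, hdir.continuous.continuousOn,
    fun t _ => norm_cos_sin_eq_one (θ t), hdir.lipschitzOnWith, ?_, ?_, ?_, ?_⟩
  · exact (hasDerivAt_toLp_vec_two ((hcos.integral_hasStrictDerivAt 0 t).hasDerivAt.const_add x₀)
      ((hsin.integral_hasStrictDerivAt 0 t).hasDerivAt.const_add y₀)).hasDerivWithinAt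
  · simp
  · simp [← Angle.cos_coe, ← Angle.sin_coe, h0]
  · simp
  · simp [← Angle.cos_coe, ← Angle.sin_coe, hT']

/-- Follow the heading `θ₁` up to time `T`, then turn the way `θ₂` does from time `0` on. -/
def concatHeading (T : ℝ) (θ₁ θ₂ : ℝ → ℝ) (t : ℝ) : ℝ :=
  θ₁ (min t T) + (θ₂ (max (t - T) 0) - θ₂ 0)

lemma lipschitzWith_concatHeading (T : ℝ) {θ₁ θ₂ : ℝ → ℝ} (h₁ : LipschitzWith 1 θ₁)
    (h₂ : LipschitzWith 1 θ₂) : LipschitzWith 1 (concatHeading T θ₁ θ₂) := by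
  refine LipschitzWith.of_dist_le_mul fun t u => ?_
  have before := h₁.dist_le_mul (min t T) (min u T)
  have after := h₂.dist_le_mul (max (t - T) 0) (max (u - T) 0)
  simp only [NNReal.coe_one, one_mul, Real.dist_eq, concatHeading] at *
  grind

lemma concatHeading_of_le {T t : ℝ} (θ₁ θ₂ : ℝ → ℝ) (ht : t ≤ T) :
    concatHeading T θ₁ θ₂ t = θ₁ t := by
  simp [concatHeading, ht]

lemma coe_concatHeading_add {T t : ℝ} {θ₁ θ₂ : ℝ → ℝ} (h : (θ₁ T : Angle) = θ₂ 0) (ht : 0 ≤ t) :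
    (concatHeading T θ₁ θ₂ (T + t) : Angle) = θ₂ t := by
  simp [concatHeading, ht, h]

lemma integral_concatHeading {T₁ T₂ : ℝ} {θ₁ θ₂ : ℝ → ℝ} {g : Angle → ℝ} (hg : Continuous g)
    (h₁ : LipschitzWith 1 θ₁) (h₂ : LipschitzWith 1 θ₂) (h : (θ₁ T₁ : Angle) = θ₂ 0)
    (hT₁ : 0 ≤ T₁) (hT₂ : 0 ≤ T₂) :
    ∫ t in 0..T₁ + T₂, g (concatHeading T₁ θ₁ θ₂ t) =
      (∫ t in 0..T₁, g (θ₁ t)) + ∫ t in 0..T₂, g (θ₂ t) := by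
  have hcont : Continuous fun t => g (concatHeading T₁ θ₁ θ₂ t) :=
    hg.comp (Angle.continuous_coe.comp (lipschitzWith_concatHeading T₁ h₁ h₂).continuous)
  rw [← intervalIntegral.integral_add_adjacent_intervals (hcont.intervalIntegrable 0 T₁)
    (hcont.intervalIntegrable T₁ (T₁ + T₂))]
  congr 1
  · refine intervalIntegral.integral_congr fun t ht => ?_
    rw [Set.uIcc_of_le hT₁] at ht
    simp only [concatHeading_of_le θ₁ θ₂ ht.2]
  · have shift := intervalIntegral.integral_comp_add_left (a := 0) (b := T₂)
      (fun t => g (concatHeading T₁ θ₁ θ₂ t)) T₁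
    rw [add_zero] at shift
    rw [← shift]
    refine intervalIntegral.integral_congr fun t ht => ?_
    rw [Set.uIcc_of_le hT₂] at ht
    simp only [coe_concatHeading_add h ht.1]

namespace Steerable

variable {T T₁ T₂ x x₁ x₂ y y₁ y₂ : ℝ} {α β δ : Angle}

lemma trans (h₁ : Steerable T₁ α β x₁ y₁) (h₂ : Steerable T₂ β δ x₂ y₂) :
    Steerable (T₁ + T₂) α δ (x₁ + x₂) (y₁ + y₂) := by
  obtain ⟨hT₁, θ₁, hθ₁, h0₁, hT₁', rfl, rfl⟩ := h₁
  obtain ⟨hT₂, θ₂, hθ₂, h0₂, hT₂', rfl, rfl⟩ := h₂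
  have hmeet : (θ₁ T₁ : Angle) = θ₂ 0 := hT₁'.trans h0₂.symm
  refine ⟨add_nonneg hT₁ hT₂, concatHeading T₁ θ₁ θ₂, lipschitzWith_concatHeading T₁ hθ₁ hθ₂,
    ?_, ?_, ?_, ?_⟩
  · rw [concatHeading_of_le θ₁ θ₂ hT₁, h0₁]
  · rw [coe_concatHeading_add hmeet hT₂, hT₂']
  · exact integral_concatHeading Angle.continuous_cos hθ₁ hθ₂ hmeet hT₁ hT₂
  · exact integral_concatHeading Angle.continuous_sin hθ₁ hθ₂ hmeet hT₁ hT₂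

lemma reflect (h : Steerable T α β x y) : Steerable T (-α) (-β) x (-y) := by
  obtain ⟨hT, θ, hθ, rfl, rfl, rfl, rfl⟩ := h
  exact ⟨hT, fun t => -θ t, hθ.neg, by simp, by simp, by simp, by simp⟩

lemma reverse (h : Steerable T α β x y) : Steerable T β α x y := by
  obtain ⟨hT, θ, hθ, rfl, rfl, rfl, rfl⟩ := h
  have hrev : LipschitzWith 1 fun t => θ (T - t) := by
    simpa [Function.comp_def] using hθ.comp ((LipschitzWith.const T).sub LipschitzWith.id)
  refine ⟨hT, fun t => θ (T - t), hrev, by simp, by simp, ?_, ?_⟩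
  · simp [intervalIntegral.integral_comp_sub_left fun t => cos (θ t)]
  · simp [intervalIntegral.integral_comp_sub_left fun t => sin (θ t)]

lemma straight {s : ℝ} (hs : 0 ≤ s) (a : ℝ) : Steerable s a a (s * cos a) (s * sin a) :=
  ⟨hs, fun _ => a, LipschitzWith.const' a, rfl, rfl, by simp, by simp⟩

lemma left {a b : ℝ} (hab : a ≤ b) : Steerable (b - a) a b (sin b - sin a) (cos a - cos b) := by
  have hθ : LipschitzWith 1 fun t => a + t := by
    simpa using (LipschitzWith.const a).add LipschitzWith.id
  refine ⟨sub_nonneg.mpr hab, fun t => a + t, hθ, by simp, by simp, ?_, ?_⟩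
  · simp [intervalIntegral.integral_comp_add_left cos]
  · simp [intervalIntegral.integral_comp_add_left sin]

lemma right {a b : ℝ} (hba : b ≤ a) : Steerable (a - b) a b (sin a - sin b) (cos b - cos a) := by
  convert (left (neg_le_neg hba)).reflect using 1 <;> simp <;> ring

lemma rsr {a b p s : ℝ} (hpa : p ≤ a) (hbp : b ≤ p) (hs : 0 ≤ s) :
    Steerable (a - b + s) a b (s * cos p + sin a - sin b) (s * sin p + cos b - cos a) := by
  convert ((right hpa).trans (straight hs p)).trans (right hbp) using 1 <;> ring

lemma lsr {a b p s : ℝ} (hap : a ≤ p) (hbp : b ≤ p) (hs : 0 ≤ s) :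
    Steerable (2 * p - a - b + s) a b (s * cos p + 2 * sin p - sin a - sin b)
      (s * sin p - 2 * cos p + cos a + cos b) := by
  convert ((left hap).trans (straight hs p)).trans (right hbp) using 1 <;> ring

lemma rlr {a b p q : ℝ} (hpa : p ≤ a) (hpq : p ≤ q) (hbq : b ≤ q) :
    Steerable (a - b + 2 * (q - p)) a b (sin a - sin b + 2 * (sin q - sin p))
      (cos b - cos a + 2 * (cos p - cos q)) := by
  convert ((right hpa).trans (left hpq)).trans (right hbq) using 1 <;> ring

end Steerable

/-- The heading can be turned from `α` to `β` along a displacement `(d, 0)` in time at most `L`. -/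
def SteerableWithin (L d : ℝ) (α β : Angle) : Prop :=
  ∃ T ≤ L, Steerable T α β d 0

namespace SteerableWithin

variable {L L' d : ℝ} {α β : Angle}

lemma mono (h : SteerableWithin L d α β) (hL : L ≤ L') : SteerableWithin L' d α β :=
  let ⟨T, hT, hsteer⟩ := h
  ⟨T, hT.trans hL, hsteer⟩

lemma reflect (h : SteerableWithin L d α β) : SteerableWithin L d (-α) (-β) :=
  let ⟨T, hT, hsteer⟩ := h
  ⟨T, hT, by simpa using hsteer.reflect⟩

lemma reverse (h : SteerableWithin L d α β) : SteerableWithin L d β α :=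
  let ⟨T, hT, hsteer⟩ := h
  ⟨T, hT, hsteer.reverse⟩

end SteerableWithin

lemma exists_polar_angle {r x y : ℝ} (hr : 0 ≤ r) (hr2 : r ^ 2 = x ^ 2 + y ^ 2) :
    ∃ φ, φ ≤ π ∧ (0 ≤ φ ↔ 0 ≤ y) ∧ x = r * cos φ ∧ y = r * sin φ := by
  have hnorm : ‖(⟨x, y⟩ : ℂ)‖ = r := by
    rw [Complex.norm_def, Complex.normSq_mk, ← sq, ← sq, ← hr2, Real.sqrt_sq hr]
  refine ⟨Complex.arg ⟨x, y⟩, Complex.arg_le_pi _, Complex.arg_nonneg_iff, ?_, ?_⟩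
  · rw [← hnorm, Complex.norm_mul_cos_arg]
  · rw [← hnorm, Complex.norm_mul_sin_arg]

lemma le_of_sin_sub_nonneg {φ ψ : ℝ} (hφ : φ ≤ π) (hψ : 0 ≤ ψ) (hne : ψ = 0 → φ ≠ π)
    (h : 0 ≤ sin (ψ - φ)) : φ ≤ ψ := by
  by_contra! hlt
  have hgt : -π < ψ - φ := by
    rcases hψ.eq_or_lt with h0 | h0
    · linarith [hφ.lt_of_ne (hne h0.symm)]
    · linarith
  exact absurd (sin_neg_of_neg_of_neg_pi_lt (sub_neg.mpr hlt) hgt) h.not_gt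

lemma le_pi_sub_arcsin_of_le_sin {r w : ℝ} (hr : 0 < r) (hrw : r ≤ sin w) (hw : w ≤ 2 * π) :
    w ≤ π - arcsin r := by
  rcases le_or_gt w (π / 2) with h | h
  · linarith [arcsin_le_pi_div_two r]
  have hwπ : w < π := by
    by_contra! hπw
    have : 0 ≤ sin (w - π) := sin_nonneg_of_nonneg_of_le_pi (by linarith) (by linarith)
    rw [sin_sub_pi] at this
    linarith
  have : arcsin r ≤ π - w := by
    rw [← arcsin_sin (x := π - w) (by linarith) (by linarith), sin_pi_sub]
    exact monotone_arcsin hrw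
  linarith

section SameTurn

variable {d μ η : ℝ}

-- `r` and `φ` are the distance and direction from the centre of the first right-turning circle
-- to the centre of the last one, hence also the length and heading of their outer tangent.
lemma exists_outer_tangent_heading {r : ℝ} (hd : 0 < d) (hμ : 0 ≤ μ) (hμη : μ ≤ η) (hη : η ≤ π)
    (hcross : 2 * sin η ^ 2 ≤ d * sin (η - μ)) (hr : 0 ≤ r)
    (hr2 : r ^ 2 = (d - 2 * cos μ * sin η) ^ 2 + (2 * sin μ * sin η) ^ 2) :
    ∃ φ, 0 ≤ φ ∧ φ ≤ η - μ ∧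
      d - 2 * cos μ * sin η = r * cos φ ∧ 2 * sin μ * sin η = r * sin φ := by
  have hsη : 0 ≤ sin η := sin_nonneg_of_nonneg_of_le_pi (by linarith) hη
  have hsμ : 0 ≤ sin μ := sin_nonneg_of_nonneg_of_le_pi hμ (by linarith)
  obtain ⟨φ, hφπ, hφ, hx, hy⟩ := exists_polar_angle hr hr2
  rcases hr.eq_or_lt with rfl | hr
  · exact ⟨0, le_rfl, by linarith, by linarith, by linarith⟩
  refine ⟨φ, hφ.mpr (by positivity), le_of_sin_sub_nonneg hφπ (by linarith) ?_ ?_, hx, hy⟩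
  · rintro h0 rfl
    have : sin η = 0 := by
      rw [h0, sin_zero, mul_zero] at hcross
      nlinarith
    rw [this, cos_pi] at hx
    linarith
  · refine nonneg_of_mul_nonneg_right ?_ hr
    have : sin η = sin (η - μ) * cos μ + cos (η - μ) * sin μ := by rw [← sin_add, sub_add_cancel]
    rw [sin_sub (η - μ)]
    linear_combination hcross + sin (η - μ) * hx - cos (η - μ) * hy - 2 * sin η * this

lemma steerableWithin_rsr (hd : 0 < d) (hμ : 0 ≤ μ) (hμη : μ ≤ η) (hη : η ≤ π)
    (hcross : 2 * sin η ^ 2 ≤ d * sin (η - μ)) :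
    SteerableWithin (d + 2 * π) d ↑(η - μ) ↑(-(μ + η)) := by
  have hsη : 0 ≤ sin η := sin_nonneg_of_nonneg_of_le_pi (by linarith) hη
  obtain ⟨r, hr, hr2⟩ : ∃ r, 0 ≤ r ∧
      r ^ 2 = (d - 2 * cos μ * sin η) ^ 2 + (2 * sin μ * sin η) ^ 2 :=
    ⟨_, Real.sqrt_nonneg _, Real.sq_sqrt (by positivity)⟩
  have hr_le : r ≤ d + 2 * sin η := by
    refine le_of_sq_le_sq ?_ (by positivity)
    have : 0 ≤ 4 * d * sin η * (1 + cos μ) :=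
      mul_nonneg (by positivity) (by linarith [neg_one_le_cos μ])
    linear_combination this + hr2 + 4 * sin η ^ 2 * sin_sq_add_cos_sq μ
  obtain ⟨φ, hφ, hφ_le, hx, hy⟩ := exists_outer_tangent_heading hd hμ hμη hη hcross hr hr2
  refine ⟨η - μ - -(μ + η) + r, ?_, ?_⟩
  · have : sin η ≤ π - η := by
      rw [← sin_pi_sub]
      exact sin_le (by linarith)
    linarith
  · convert Steerable.rsr hφ_le (show -(μ + η) ≤ φ by linarith) hr using 1
    · rw [sin_neg, sin_sub, sin_add]
      linear_combination hx
    · rw [cos_neg, cos_sub, cos_add]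
      linear_combination hy

end SameTurn

section RightLeftRight

variable {d μ η ρ : ℝ}

-- `ρ` and `κ` are the distance and direction from the centre of the first right-turning circle
-- to the centre of the last one.
lemma exists_axis_heading (hd : 0 < d) (hμ : 0 ≤ μ) (hμπ : μ ≤ π) (hη : 0 ≤ sin η) (hρ : 0 < ρ)
    (hρ2 : ρ ^ 2 = d ^ 2 + 4 * d * cos μ * sin η + 4 * sin η ^ 2) :
    ∃ κ, 0 ≤ κ ∧ κ ≤ μ ∧ d + 2 * cos μ * sin η = ρ * cos κ ∧ 2 * sin μ * sin η = ρ * sin κ := by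
  have hsμ : 0 ≤ sin μ := sin_nonneg_of_nonneg_of_le_pi hμ hμπ
  obtain ⟨κ, hκπ, hκ, hx, hy⟩ :=
    exists_polar_angle (x := d + 2 * cos μ * sin η) (y := 2 * sin μ * sin η) hρ.le (by
      linear_combination hρ2 - 4 * sin η ^ 2 * sin_sq_add_cos_sq μ)
  refine ⟨κ, hκ.mpr (by positivity), ?_, hx, hy⟩
  refine le_of_sin_sub_nonneg hκπ hμ ?_ (nonneg_of_mul_nonneg_right ?_ hρ)
  · rintro rfl rfl
    rw [cos_pi, cos_zero] at hx
    linarith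
  · have : 0 ≤ d * sin μ := by positivity
    rw [sin_sub]
    linear_combination this + sin μ * hx - cos μ * hy

lemma steerable_rlr_of_axis {κ q : ℝ} (hη : 0 ≤ η) (hstart : κ - μ + η ≤ q)
    (hend : μ + η - κ ≤ q) (hx : d + 2 * cos μ * sin η = 4 * sin q * cos κ)
    (hy : 2 * sin μ * sin η = 4 * sin q * sin κ) :
    Steerable (4 * q - 2 * η) ↑(μ - η) ↑(μ + η) d 0 := by
  convert Steerable.rlr (show κ - q ≤ μ - η by linarith) (show κ - q ≤ κ + q by
    linarith) (show μ + η ≤ κ + q by linarith) using 1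
  · ring
  · rw [sin_sub, sin_add, sin_add, sin_sub]
    linear_combination hx
  · rw [cos_sub, cos_add, cos_sub, cos_add]
    linear_combination hy

lemma steerable_rlr (hd : 0 < d) (hμ : 0 ≤ μ) (hμπ : μ ≤ π) (hη : 0 ≤ η) (hηπ : η ≤ π)
    (hρ : 0 < ρ) (hρ2 : ρ ^ 2 = d ^ 2 + 4 * d * cos μ * sin η + 4 * sin η ^ 2)
    (hend : d ^ 2 ≤ 4 * d * sin μ * cos η + 4 * sin η ^ 2) :
    Steerable (4 * (π - arcsin (ρ / 4)) - 2 * η) ↑(μ - η) ↑(μ + η) d 0 := by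
  have hsη : 0 ≤ sin η := sin_nonneg_of_nonneg_of_le_pi hη hηπ
  have hsμ : 0 ≤ sin μ := sin_nonneg_of_nonneg_of_le_pi hμ hμπ
  obtain ⟨κ, hκ, hκμ, hx, hy⟩ := exists_axis_heading hd hμ hμπ hsη hρ hρ2
  have cross (z : ℝ) : ρ * sin (z - κ) = d * sin z + 2 * sin η * sin (z - μ) := by
    rw [sin_sub z κ, sin_sub z μ]
    linear_combination (-sin z) * hx + cos z * hy
  have hsin_end : ρ / 4 ≤ sin (μ + η - κ) := by
    refine le_of_mul_le_mul_left ?_ hρ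
    rw [cross, add_sub_cancel_left, sin_add]
    linear_combination hρ2 / 4 + hend / 4
  have hend_le : μ + η - κ ≤ π - arcsin (ρ / 4) :=
    le_pi_sub_arcsin_of_le_sin (by positivity) hsin_end (by linarith)
  have hstart_le : κ - μ + η ≤ π - arcsin (ρ / 4) := by
    rcases le_or_gt η (π / 2) with hη2 | hη2
    · linarith [arcsin_le_pi_div_two (ρ / 4), hη2]
    · have hcη : cos η ≤ 0 := cos_nonpos_of_pi_div_two_le_of_le hη2.le (by linarith)
      have hneg : d * sin μ * cos η ≤ 0 := mul_nonpos_of_nonneg_of_nonpos (by positivity) hcη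
      refine le_pi_sub_arcsin_of_le_sin (by positivity) (le_of_mul_le_mul_left ?_ hρ) (by linarith)
      rw [show κ - μ + η = -(μ - η - κ) by ring, sin_neg, mul_neg, cross,
        show μ - η - μ = -η by ring, sin_neg, sin_sub]
      linear_combination hρ2 / 4 + hend / 4 + 2 * hneg
  have hρ_eq : ρ = 4 * sin (π - arcsin (ρ / 4)) := by
    rw [sin_pi_sub, sin_arcsin (by linarith) (hsin_end.trans (sin_le_one _))]
    ring
  exact steerable_rlr_of_axis hη hstart_le hend_le (by rwa [← hρ_eq]) (by rwa [← hρ_eq])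

lemma sixteen_mul_sin_sq_three_pi_div_eight_sub (η : ℝ) :
    16 * sin (3 * π / 8 - η / 2) ^ 2 = 8 + 4 * √2 * (cos η - sin η) := by
  have hcos : cos (3 * π / 4 - η) = √2 / 2 * (sin η - cos η) := by
    rw [show 3 * π / 4 - η = π - (π / 4 + η) by ring, cos_pi_sub, cos_add, cos_pi_div_four,
      sin_pi_div_four]
    ring
  rw [sin_sq_eq_half_sub, show 2 * (3 * π / 8 - η / 2) = 3 * π / 4 - η by ring, hcos]
  ring

lemma steerableWithin_rlr (hd : 0 < d) (hμ : 0 ≤ μ) (hμ2 : μ ≤ π / 2) (hη : 0 ≤ η) (hηπ : η ≤ π)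
    (hend : d ^ 2 ≤ 4 * d * sin μ * cos η + 4 * sin η ^ 2)
    (hlen : 8 + 4 * √2 * (cos η - sin η) ≤ d ^ 2 + 4 * d * cos μ * sin η + 4 * sin η ^ 2) :
    SteerableWithin (5 * π / 2) d ↑(μ - η) ↑(μ + η) := by
  have hsη : 0 ≤ sin η := sin_nonneg_of_nonneg_of_le_pi hη hηπ
  have hcμ : 0 ≤ cos μ := cos_nonneg_of_neg_pi_div_two_le_of_le (by linarith) hμ2
  set ρ := √(d ^ 2 + 4 * d * cos μ * sin η + 4 * sin η ^ 2)
  have hρ2 : ρ ^ 2 = d ^ 2 + 4 * d * cos μ * sin η + 4 * sin η ^ 2 := Real.sq_sqrt (by positivity)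
  have hρ : 0 < ρ := by positivity
  refine ⟨_, ?_, steerable_rlr hd hμ (by linarith) hη hηπ hρ hρ2 hend⟩
  have hsin : sin (3 * π / 8 - η / 2) ≤ ρ / 4 := by
    refine le_of_sq_le_sq ?_ (by positivity)
    linear_combination (sixteen_mul_sin_sq_three_pi_div_eight_sub η + hlen - hρ2) / 16
  have harcsin : 3 * π / 8 - η / 2 ≤ arcsin (ρ / 4) := by
    rw [← arcsin_sin (x := 3 * π / 8 - η / 2) (by linarith [pi_pos]) (by linarith [pi_pos])]
    exact monotone_arcsin hsin
  linarith

end RightLeftRight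

lemma coe_neg_pi_sub_add_pi_sub (a b : ℝ) : ((-(π - a + (π - b)) : ℝ) : Angle) = ↑(a + b) := by
  rw [show -(π - a + (π - b)) = a + b - 2 * π by ring, Angle.coe_sub, Angle.coe_two_pi, sub_zero]

lemma steerableWithin_of_two_mul_sin_sq_le {d μ η : ℝ} (hd : 0 < d) (hμ : 0 ≤ μ) (hμπ : μ ≤ π)
    (hη : 0 ≤ η) (hηπ : η ≤ π) (h : 2 * sin η ^ 2 ≤ |d * sin (μ - η)|) :
    SteerableWithin (d + 2 * π) d ↑(μ - η) ↑(μ + η) := by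
  rcases le_total μ η with hμη | hημ
  · have hsin : 0 ≤ sin (η - μ) := sin_nonneg_of_nonneg_of_le_pi (by linarith) (by linarith)
    rw [← neg_sub η μ, sin_neg, mul_neg, abs_neg, abs_of_nonneg (by positivity)] at h
    simpa [add_comm] using (steerableWithin_rsr hd hμ hμη hηπ h).reflect
  · have hsin : 0 ≤ sin (μ - η) := sin_nonneg_of_nonneg_of_le_pi (by linarith) (by linarith)
    rw [abs_of_nonneg (by positivity)] at h
    have hrsr := steerableWithin_rsr hd (sub_nonneg.mpr hμπ) (by linarith) (by linarith)
      (η := π - η) (by rwa [sin_pi_sub, sub_sub_sub_cancel_left])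
    rwa [sub_sub_sub_cancel_left, coe_neg_pi_sub_add_pi_sub] at hrsr

section ThreeArcs

variable {d μ η : ℝ}

lemma one_le_sqrt_two_mul {x : ℝ} (hx : 0 ≤ x) (h : 1 ≤ 2 * x ^ 2) : 1 ≤ √2 * x := by
  refine le_of_sq_le_sq ?_ (by positivity)
  rw [mul_pow, Real.sq_sqrt zero_le_two]
  linarith

lemma rlr_length_bound (hsμ : 0 ≤ sin μ) (hcμ : 0 ≤ cos μ) (hsη : 0 ≤ sin η) (hcη : 0 ≤ cos η)
    (h : 2 + 4 * √2 * sin μ * cos η ≤ 4 * sin η ^ 2) :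
    8 + 4 * √2 * (cos η - sin η) ≤ 2 + 4 * √2 * cos μ * sin η + 4 * sin η ^ 2 := by
  have hη := sin_sq_add_cos_sq η
  have hprod : 0 ≤ √2 * sin μ * cos η := by positivity
  have hS : 1 ≤ √2 * sin η := one_le_sqrt_two_mul hsη (by linarith)
  rcases le_or_gt (sin η ^ 2 - cos η ^ 2) (2 * √2 * cos η) with hcase | hcase
  · have hcη' : 0 < cos η := hcη.lt_of_ne' fun h0 => by
      rw [h0] at hcase hη
      linarith
    have hcs : cos η ≤ sin η := le_of_sq_le_sq (by linarith) hsη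
    have hμ : 1 - sin μ ≤ cos μ := by
      nlinarith [sin_sq_add_cos_sq μ, mul_nonneg hsμ hcμ]
    refine le_of_mul_le_mul_left ?_ hcη'
    have hgap := mul_le_mul_of_nonneg_right hcase (sub_nonneg.mpr hcs)
    have hcos := mul_le_mul_of_nonneg_left hμ (show 0 ≤ √2 * sin η * cos η by positivity)
    have hscaled := mul_le_mul_of_nonneg_left h hsη
    have hslack := mul_le_mul_of_nonneg_left hS hcη
    linear_combination 2 * hgap + 4 * hcos + hscaled + 4 * hslack + 2 * (sin η - cos η) * hη
  · have : 0 ≤ √2 * cos μ * sin η := by positivity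
    linarith

lemma two_le_sq_of_sqrt_two_le (hd : √2 ≤ d) : 2 ≤ d ^ 2 :=
  (Real.sqrt_le_left (Real.sqrt_nonneg 2 |>.trans hd)).mp hd

lemma steerableWithin_rlr_of_le (hd : √2 ≤ d) (hμ : 0 ≤ μ) (hμ2 : μ ≤ π / 2) (hη : 0 ≤ η)
    (hη2 : η ≤ π / 2) (hend : d ^ 2 ≤ 4 * d * sin μ * cos η + 4 * sin η ^ 2)
    (h : 2 + 4 * √2 * sin μ * cos η ≤ 4 * sin η ^ 2) :
    SteerableWithin (5 * π / 2) d ↑(μ - η) ↑(μ + η) := by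
  have hsη : 0 ≤ sin η := sin_nonneg_of_nonneg_of_le_pi hη (by linarith)
  have hcη : 0 ≤ cos η := cos_nonneg_of_neg_pi_div_two_le_of_le (by linarith) hη2
  have hsμ : 0 ≤ sin μ := sin_nonneg_of_nonneg_of_le_pi hμ (by linarith)
  have hcμ : 0 ≤ cos μ := cos_nonneg_of_neg_pi_div_two_le_of_le (by linarith) hμ2
  have hlift := mul_le_mul_of_nonneg_right hd (mul_nonneg hcμ hsη)
  refine steerableWithin_rlr (hd.trans_lt' (by positivity)) hμ hμ2 hη (by linarith) hend ?_
  linarith [rlr_length_bound hsμ hcμ hsη hcη h, two_le_sq_of_sqrt_two_le hd]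

lemma steerableWithin_lrl_of_le (hd : √2 ≤ d) (hμ : π / 2 ≤ μ) (hμπ : μ ≤ π) (hη : 0 ≤ η)
    (hη2 : η ≤ π / 2) (hend : d ^ 2 + 4 * d * sin μ * cos η ≤ 4 * sin η ^ 2) :
    SteerableWithin (5 * π / 2) d ↑(μ - η) ↑(μ + η) := by
  have hd0 : 0 < d := hd.trans_lt' (by positivity)
  have hsη : 0 ≤ sin η := sin_nonneg_of_nonneg_of_le_pi hη (by linarith)
  have hcη : 0 ≤ cos η := cos_nonneg_of_neg_pi_div_two_le_of_le (by linarith) hη2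
  have hsμ : 0 ≤ sin μ := sin_nonneg_of_nonneg_of_le_pi (by linarith) hμπ
  have hcμ : cos μ ≤ 0 := cos_nonpos_of_pi_div_two_le_of_le hμ (by linarith)
  have hprod : 0 ≤ d * sin μ * cos η := by positivity
  have hd2 := two_le_sq_of_sqrt_two_le hd
  have hS : 1 ≤ √2 * sin η := one_le_sqrt_two_mul hsη (by linarith)
  have hrlr : SteerableWithin (5 * π / 2) d ↑(π - μ - (π - η)) ↑(π - μ + (π - η)) := by
    refine steerableWithin_rlr hd0 (by linarith) (by linarith) (by linarith) (by linarith) ?_ ?_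
    · rw [sin_pi_sub, sin_pi_sub, cos_pi_sub]
      linarith
    · have : 0 ≤ d * -cos μ * sin η := mul_nonneg (mul_nonneg hd0.le (by linarith)) hsη
      have : 0 ≤ √2 * cos η := by positivity
      rw [sin_pi_sub, cos_pi_sub, cos_pi_sub]
      linarith
  simpa only [← Angle.coe_neg, sub_sub_sub_cancel_left, neg_sub, coe_neg_pi_sub_add_pi_sub] using
    hrlr.reflect

end ThreeArcs

/-- The heading `h` and length `s` of a common inner tangent, running from the unit circle on the
left of the initial configuration `(0, 0, μ - η)` to the unit circle on the right of the final
configuration `(d, 0, μ + η)`. The centres differ by `(d + 2 sin μ cos η, -2 cos μ cos η)`; this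
vector has component `s` along the heading `h` and component `2` to the right of it. -/
structure IsInnerTangent (d μ η h s : ℝ) : Prop where
  nonneg : 0 ≤ s
  along : d * cos h - 2 * cos η * sin (h - μ) = s
  across : d * sin h + 2 * cos η * cos (h - μ) = 2

lemma exists_isInnerTangent {d μ η : ℝ} (hdisj : 4 * sin η ^ 2 ≤ d ^ 2 + 4 * d * sin μ * cos η)
    (a : ℝ) : ∃ h ∈ Set.Ico a (a + 2 * π), ∃ s, IsInnerTangent d μ η h s := by
  have hη := sin_sq_add_cos_sq η
  set R := √(d ^ 2 + 4 * d * sin μ * cos η + 4 * cos η ^ 2)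
  have hR2 : R ^ 2 = d ^ 2 + 4 * d * sin μ * cos η + 4 * cos η ^ 2 := Real.sq_sqrt (by linarith)
  have hR : 2 ≤ R := Real.le_sqrt_of_sq_le (by linarith)
  obtain ⟨κ, -, -, hx, hy⟩ :=
    exists_polar_angle (x := d + 2 * sin μ * cos η) (y := -(2 * cos μ * cos η)) (r := R)
      (by linarith) (by linear_combination hR2 - 4 * cos η ^ 2 * sin_sq_add_cos_sq μ)
  obtain ⟨σ, hσ, hcos⟩ : ∃ σ, R * sin σ = 2 ∧ 0 ≤ cos σ := by
    have hdiv : 2 / R ≤ 1 := (div_le_one (by linarith)).mpr hR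
    have hdiv0 : 0 ≤ 2 / R := by positivity
    refine ⟨arcsin (2 / R), ?_, cos_arcsin_nonneg _⟩
    rw [sin_arcsin (by linarith) hdiv, mul_div_cancel₀ _ (by linarith)]
  obtain ⟨h, hh, hcos_h, hsin_h⟩ : ∃ h ∈ Set.Ico a (a + 2 * π),
      cos h = cos (κ + σ) ∧ sin h = sin (κ + σ) := by
    refine ⟨toIcoMod two_pi_pos a (κ + σ), toIcoMod_mem_Ico _ _ _, ?_, ?_⟩
    · rw [← Angle.cos_coe, Angle.coe_toIcoMod, Angle.cos_coe]
    · rw [← Angle.sin_coe, Angle.coe_toIcoMod, Angle.sin_coe]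
  refine ⟨h, hh, R * cos σ, by positivity, ?_, ?_⟩
  · rw [sin_sub, hcos_h, hsin_h, cos_add, sin_add]
    linear_combination (cos κ * cos σ - sin κ * sin σ) * hx
      + (sin κ * cos σ + cos κ * sin σ) * hy + R * cos σ * sin_sq_add_cos_sq κ
  · rw [cos_sub, hcos_h, hsin_h, cos_add, sin_add]
    linear_combination (sin κ * cos σ + cos κ * sin σ) * hx
      - (cos κ * cos σ - sin κ * sin σ) * hy + R * sin σ * sin_sq_add_cos_sq κ + hσ

namespace IsInnerTangent

variable {d μ η h s : ℝ}

lemma mul_cos (H : IsInnerTangent d μ η h s) :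
    d * cos μ = s * cos (h - μ) + 2 * sin (h - μ) := by
  have hμ : cos μ = cos h * cos (h - μ) + sin h * sin (h - μ) := by
    rw [← cos_sub, sub_sub_cancel]
  linear_combination d * hμ + cos (h - μ) * H.along + sin (h - μ) * H.across

lemma mul_sin_add (H : IsInnerTangent d μ η h s) :
    d * sin μ + 2 * cos η = 2 * cos (h - μ) - s * sin (h - μ) := by
  have hμ : sin μ = sin h * cos (h - μ) - cos h * sin (h - μ) := by
    rw [← sin_sub, sub_sub_cancel]
  linear_combination d * hμ - sin (h - μ) * H.along + cos (h - μ) * H.across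
    - 2 * cos η * sin_sq_add_cos_sq (h - μ)

lemma steerable (H : IsInnerTangent d μ η h s) (hstart : μ - η ≤ h) (hend : μ + η ≤ h) :
    Steerable (2 * (h - μ) + s) ↑(μ - η) ↑(μ + η) d 0 := by
  have along := H.along
  have across := H.across
  rw [sin_sub] at along
  rw [cos_sub] at across
  convert Steerable.lsr hstart hend H.nonneg using 1
  · ring
  · rw [sin_sub, sin_add]
    linear_combination cos h * along + sin h * across
      - (d + 2 * sin μ * cos η) * sin_sq_add_cos_sq h
  · rw [cos_sub, cos_add]
    linear_combination sin h * along - cos h * across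
      + 2 * cos μ * cos η * sin_sq_add_cos_sq h

lemma sub_pi (H : IsInnerTangent d μ η h s) : IsInnerTangent d (μ - π) (η - π) h s where
  nonneg := H.nonneg
  along := by
    rw [cos_sub_pi, show h - (μ - π) = h - μ + π by ring, sin_add_pi]
    linear_combination H.along
  across := by
    rw [cos_sub_pi, show h - (μ - π) = h - μ + π by ring, cos_add_pi]
    linear_combination H.across

lemma steerable_loop (H : IsInnerTangent d μ η h s) (hstart : μ - η ≤ h)
    (hend : μ + η - 2 * π ≤ h) :
    Steerable (2 * (h - μ) + 2 * π + s) ↑(μ - η) ↑(μ + η) d 0 := by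
  have hsteer := H.sub_pi.steerable (by linarith) (by linarith)
  have hβ : ((μ - π + (η - π) : ℝ) : Angle) = ↑(μ + η) := by
    rw [show μ - π + (η - π) = μ + η - 2 * π by ring, Angle.coe_sub, Angle.coe_two_pi, sub_zero]
  rw [sub_sub_sub_cancel_right, hβ] at hsteer
  convert hsteer using 1
  ring

lemma steerableWithin (H : IsInnerTangent d μ η h s) (hd : 0 ≤ d) (hcη : 0 ≤ cos η)
    (hstart : μ - η ≤ h) (hend : μ + η ≤ h) (hh : h ≤ μ + π) :
    SteerableWithin (d + 2 * π) d ↑(μ - η) ↑(μ + η) := by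
  refine ⟨_, ?_, H.steerable hstart hend⟩
  have hsin : 0 ≤ sin (h - μ) := sin_nonneg_of_nonneg_of_le_pi (by linarith) (by linarith)
  have hs : s ≤ d := by
    linarith [H.along, mul_nonneg hcη hsin, mul_le_of_le_one_right hd (cos_le_one h)]
  linarith

lemma steerableWithin_loop (H : IsInnerTangent d μ η h s) (hd : 0 ≤ d) (hcη : 0 ≤ cos η)
    (hstart : μ - η ≤ h) (hend : μ + η - 2 * π ≤ h) (hh : h ≤ μ) :
    SteerableWithin (d + 2 * π) d ↑(μ - η) ↑(μ + η) := by
  refine ⟨_, ?_, H.steerable_loop hstart hend⟩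
  have hsin : h - μ ≤ sin (h - μ) := by
    rw [← neg_sub μ h, sin_neg]
    exact neg_le_neg (sin_le (by linarith))
  have hmul : cos η * (h - μ) ≤ cos η * sin (h - μ) := mul_le_mul_of_nonneg_left hsin hcη
  have hturn : 0 ≤ (1 - cos η) * (μ - h) :=
    mul_nonneg (sub_nonneg.mpr (cos_le_one η)) (sub_nonneg.mpr hh)
  linarith [H.along, mul_le_of_le_one_right hd (cos_le_one h)]

lemma le_sub_add_pi (H : IsInnerTangent d μ η h s) (hlt : h < μ - η + 2 * π)
    (hcross : |d * sin (μ - η)| ≤ 2 * sin η ^ 2)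
    (hahead : 0 ≤ d * cos (μ - η) + 2 * cos η * sin η) : h ≤ μ - η + π := by
  by_contra! hgt
  obtain ⟨x, hx⟩ : ∃ x, x = μ - η + 2 * π - h := ⟨_, rfl⟩
  have hsin : 0 < sin x := sin_pos_of_pos_of_lt_pi (by linarith) (by linarith)
  have hcos : |cos x| < 1 := by
    rw [← sq_lt_one_iff_abs_lt_one]
    nlinarith [sin_sq_add_cos_sq x]
  have hside : |2 * cos η ^ 2 + d * sin (μ - η)| ≤ 2 := by
    have := sin_sq_add_cos_sq η
    rw [abs_le] at hcross ⊢
    constructor <;> nlinarith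
  have hsin_h : sin h = sin (μ - η - x) := by
    rw [hx, show μ - η - (μ - η + 2 * π - h) = h - 2 * π by ring, sin_sub_two_pi]
  have hcos_h : cos (h - μ) = cos (η + x) := by
    rw [hx, show η + (μ - η + 2 * π - h) = -(h - μ) + 2 * π by ring, cos_add_two_pi, cos_neg]
  have across : cos x * (2 * cos η ^ 2 + d * sin (μ - η))
      - sin x * (d * cos (μ - η) + 2 * cos η * sin η) = 2 := by
    have across := H.across
    rw [hsin_h, hcos_h, sin_sub (μ - η), cos_add] at across
    linear_combination across
  have hlt_two : |cos x * (2 * cos η ^ 2 + d * sin (μ - η))| < 2 := by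
    rw [abs_mul]
    nlinarith [abs_nonneg (cos x)]
  linarith [mul_nonneg hsin.le hahead, le_abs_self (cos x * (2 * cos η ^ 2 + d * sin (μ - η)))]

lemma along_nonneg_of_le {d₀ : ℝ} (H : IsInnerTangent d μ η h s) (hd₀ : 0 < d₀) (hle : d₀ ≤ d)
    (hdisj : 4 * sin η ^ 2 ≤ d₀ ^ 2 + 4 * d₀ * sin μ * cos η) (hsμ : 0 ≤ sin μ)
    (hcη : 0 ≤ cos η) (hsh : 0 ≤ sin h) (hcm : 0 ≤ cos (h - μ)) :
    0 ≤ d₀ * cos h - 2 * cos η * sin (h - μ) := by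
  by_contra! hneg
  have hch : 0 < cos h := by
    refine pos_of_mul_pos_right (a := d - d₀) ?_ (sub_nonneg.mpr hle)
    linarith [H.along, H.nonneg]
  -- At the distance `d'` where the tangent would have length `0` the circles touch, although
  -- their centres are further apart than at distance `d₀`, hence more than `2`.
  obtain ⟨d', hd'⟩ : ∃ d', d' * cos h = 2 * cos η * sin (h - μ) :=
    ⟨_, div_mul_cancel₀ _ hch.ne'⟩
  have hlt : d₀ < d' := lt_of_mul_lt_mul_right (by linarith) hch.le
  have hd'd : d' ≤ d := le_of_mul_le_mul_right (by linarith [H.along, H.nonneg]) hch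
  have hd'0 : 0 < d' := hd₀.trans hlt
  have hdist : d' ^ 2 + 4 * d' * sin μ * cos η + 4 * cos η ^ 2 =
      (d' * sin h + 2 * cos η * cos (h - μ)) ^ 2 := by
    have hμ : sin μ = sin h * cos (h - μ) - cos h * sin (h - μ) := by
      rw [← sin_sub, sub_sub_cancel]
    linear_combination 4 * d' * cos η * hμ - d' ^ 2 * sin_sq_add_cos_sq h
      - 4 * cos η ^ 2 * sin_sq_add_cos_sq (h - μ)
      + (d' * cos h - 2 * cos η * sin (h - μ)) * hd'
  have hacross : (d' * sin h + 2 * cos η * cos (h - μ)) ^ 2 ≤ 2 ^ 2 := by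
    refine pow_le_pow_left₀ (by positivity) ?_ 2
    linarith [H.across, mul_le_mul_of_nonneg_right hd'd hsh]
  have hsq : d₀ ^ 2 < d' ^ 2 := pow_lt_pow_left₀ hlt hd₀.le two_ne_zero
  have hprod := mul_le_mul_of_nonneg_right hlt.le (mul_nonneg hsμ hcη)
  linarith [sin_sq_add_cos_sq η]

end IsInnerTangent

lemma two_mul_add_sub_le_two_mul {m Q t : ℝ} (hm : m < π) (ht : 0 ≤ t) (hsm : 0 ≤ sin m)
    (hQ : 2 * cos t ≤ Q) (hnonneg : 0 ≤ 2 * sin t * cos m - Q * sin m) :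
    2 * m + (2 * sin t * cos m - Q * sin m) ≤ 2 * t := by
  have hle : 2 * sin t * cos m - Q * sin m ≤ 2 * sin (t - m) := by
    rw [sin_sub]
    linarith [mul_le_mul_of_nonneg_right hQ hsm]
  have hmt : m ≤ t := by
    by_contra! hlt
    linarith [sin_neg_of_neg_of_neg_pi_lt (show t - m < 0 by linarith) (by linarith)]
  linarith [sin_le (show 0 ≤ t - m by linarith)]

lemma exists_two_mul_sin_eq_sqrt_two_mul {x : ℝ} (hx : 0 ≤ x) (hx1 : x ≤ 1) :
    ∃ t, 0 ≤ t ∧ t ≤ π / 4 ∧ 2 * sin t = √2 * x := by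
  have hle : √2 * x / 2 ≤ √2 / 2 := by linarith [mul_le_of_le_one_right (Real.sqrt_nonneg 2) hx1]
  have h0 : 0 ≤ √2 * x / 2 := by positivity
  refine ⟨arcsin (√2 * x / 2), arcsin_nonneg.mpr h0, ?_, ?_⟩
  · rwa [arcsin_le_iff_le_sin' ⟨by linarith [pi_pos], by linarith [pi_pos]⟩, sin_pi_div_four]
  · rw [sin_arcsin (by linarith) (by linarith [Real.sqrt_two_lt_three_halves])]
    ring

section CrossTurn

variable {d μ η h s : ℝ}

lemma IsInnerTangent.two_mul_sub_add_le (H : IsInnerTangent d μ η h s) (hd : √2 ≤ d)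
    (hμ : 0 ≤ μ) (hμ2 : μ ≤ π / 2) (hη2 : η ≤ π / 2) (hμh : μ ≤ h) (hhη : h ≤ μ + η)
    (hdisj : 4 * sin η ^ 2 ≤ 2 + 4 * √2 * sin μ * cos η) :
    2 * (h - μ) + s ≤ d + π / 2 - √2 := by
  have hcη : 0 ≤ cos η := cos_nonneg_of_neg_pi_div_two_le_of_le (by linarith) hη2
  have hsμ : 0 ≤ sin μ := sin_nonneg_of_nonneg_of_le_pi hμ (by linarith)
  have hcμ : 0 ≤ cos μ := cos_nonneg_of_neg_pi_div_two_le_of_le (by linarith) hμ2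
  have hsm : 0 ≤ sin (h - μ) := sin_nonneg_of_nonneg_of_le_pi (by linarith) (by linarith)
  have hcm : 0 ≤ cos (h - μ) := cos_nonneg_of_neg_pi_div_two_le_of_le (by linarith) (by linarith)
  have hsh : 0 ≤ sin h := sin_nonneg_of_nonneg_of_le_pi (by linarith) (by linarith)
  have hsqrt : √2 ^ 2 = 2 := Real.sq_sqrt zero_le_two
  have htangent := H.along_nonneg_of_le (by positivity) hd (by rwa [hsqrt]) hsμ hcη hsh hcm
  have hs : s ≤ √2 * cos h - 2 * cos η * sin (h - μ) + (d - √2) := by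
    linarith [H.along, mul_le_of_le_one_right (sub_nonneg.mpr hd) (cos_le_one h)]
  have hcos_h : cos h = cos μ * cos (h - μ) - sin μ * sin (h - μ) := by
    rw [← cos_add, add_sub_cancel]
  obtain ⟨t, ht, ht4, hsin_t⟩ := exists_two_mul_sin_eq_sqrt_two_mul hcμ (cos_le_one μ)
  have hcos_t : 2 * cos t ≤ √2 * sin μ + 2 * cos η := by
    refine le_of_sq_le_sq ?_ (by positivity)
    linear_combination hdisj + 4 * sin_sq_add_cos_sq t - (2 * sin t + √2 * cos μ) * hsin_t
      - √2 ^ 2 * sin_sq_add_cos_sq μ - 4 * sin_sq_add_cos_sq η - hsqrt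
  have hlen := two_mul_add_sub_le_two_mul (m := h - μ) (by linarith [pi_pos]) ht hsm hcos_t (by
    rw [hsin_t]; linear_combination htangent + √2 * hcos_h)
  rw [hsin_t] at hlen
  linear_combination hs + hlen + √2 * hcos_h + 2 * ht4

lemma two_mul_cos_mul_sin_le (hd : 0 ≤ d) (hsμ : 0 ≤ sin μ) (hcη : 0 ≤ cos η)
    (hcos : 0 ≤ cos (μ - η)) (hcross : |d * sin (μ - η)| ≤ 2 * sin η ^ 2)
    (hdisj : 4 * sin η ^ 2 ≤ d ^ 2 - 4 * d * sin μ * cos η) :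
    2 * cos η * sin η ≤ d * cos (μ - η) := by
  refine le_of_sq_le_sq ?_ (by positivity)
  have hsq : (d * sin (μ - η)) ^ 2 ≤ (2 * sin η ^ 2) ^ 2 :=
    sq_le_sq.mpr (hcross.trans (le_abs_self _))
  have hprod : 0 ≤ d * sin μ * cos η := by positivity
  linear_combination hsq + hdisj + 4 * hprod + 4 * sin η ^ 2 * sin_sq_add_cos_sq η
    - d ^ 2 * sin_sq_add_cos_sq (μ - η)

lemma steerableWithin_rsl (hd : 0 < d) (hμ : 0 ≤ μ) (hμ2 : μ ≤ π / 2) (hη : 0 ≤ η)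
    (hη2 : η ≤ π / 2) (hcross : |d * sin (μ - η)| ≤ 2 * sin η ^ 2)
    (hdisj : 4 * sin η ^ 2 ≤ d ^ 2 - 4 * d * sin μ * cos η) (hsin : d * sin μ ≤ 2) :
    SteerableWithin (d + 2 * π) d ↑(μ - η) ↑(μ + η) := by
  have hcη : 0 ≤ cos η := cos_nonneg_of_neg_pi_div_two_le_of_le (by linarith) hη2
  have hsμ : 0 ≤ sin μ := sin_nonneg_of_nonneg_of_le_pi hμ (by linarith)
  have hcos : 0 ≤ cos (μ - η) := cos_nonneg_of_neg_pi_div_two_le_of_le (by linarith) (by linarith)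
  obtain ⟨h, ⟨hh, hh'⟩, s, H⟩ := exists_isInnerTangent (d := d) (μ := -μ) (η := -η)
    (by simpa [sub_eq_add_neg] using hdisj) (-μ - -η)
  have hhη : h ≤ -μ - -η + π := by
    refine H.le_sub_add_pi hh' ?_ ?_
    · rwa [← neg_sub', sin_neg, sin_neg, mul_neg, abs_neg, neg_sq]
    · rw [← neg_sub', cos_neg, cos_neg, sin_neg]
      linarith [two_mul_cos_mul_sin_le hd.le hsμ hcη hcos hcross hdisj]
  have hhπ : h ≤ -μ + π := by
    by_contra! hlt
    have hcos_h : cos (h - -μ) ≤ 0 :=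
      cos_nonpos_of_pi_div_two_le_of_le (by linarith) (by linarith)
    have hsin_h : sin h < sin μ := by
      rw [← sin_pi_sub]
      exact sin_lt_sin_of_lt_of_le_pi_div_two (by linarith) hμ2 (by linarith)
    have across := H.across
    rw [cos_neg] at across
    linarith [mul_lt_mul_of_pos_left hsin_h hd, mul_nonpos_of_nonneg_of_nonpos hcη hcos_h]
  have hlsr := (H.steerableWithin hd.le (by rwa [cos_neg]) hh (by linarith) hhπ).reflect
  rwa [← Angle.coe_neg, ← Angle.coe_neg, show -(-μ - -η) = μ - η by ring,
    show -(-μ + -η) = μ + η by ring] at hlsr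

lemma add_two_pi_le (d : ℝ) : d + 2 * π ≤ d + 5 * π / 2 - √2 := by
  linarith [Real.sqrt_two_lt_three_halves, pi_gt_three]

lemma IsInnerTangent.steerableWithin_of_mem_Ioc (H : IsInnerTangent d μ η h s) (hd : √2 ≤ d)
    (hμ : 0 ≤ μ) (hμπ : μ ≤ π) (hη : 0 ≤ η) (hη2 : η ≤ π / 2)
    (hcross : |d * sin (μ - η)| ≤ 2 * sin η ^ 2) (hh : h ∈ Set.Ioc μ (μ + η)) :
    SteerableWithin (d + 5 * π / 2 - √2) d ↑(μ - η) ↑(μ + η) := by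
  obtain ⟨hμh, hhη⟩ := hh
  have hd0 : 0 < d := hd.trans_lt' (by positivity)
  have hcη : 0 ≤ cos η := cos_nonneg_of_neg_pi_div_two_le_of_le (by linarith) hη2
  have hsm : 0 < sin (h - μ) := sin_pos_of_pos_of_lt_pi (by linarith) (by linarith [pi_pos])
  have hcm : 0 ≤ cos (h - μ) := cos_nonneg_of_neg_pi_div_two_le_of_le (by linarith) (by linarith)
  have hμ2 : μ ≤ π / 2 := by
    have hcμ : 0 < cos μ := by
      refine pos_of_mul_pos_right ?_ hd0.le
      linarith [H.mul_cos, mul_nonneg H.nonneg hcm]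
    by_contra! hlt
    linarith [cos_nonpos_of_pi_div_two_le_of_le hlt.le (by linarith)]
  have hsin : d * sin μ ≤ 2 := by
    linarith [H.mul_sin_add, mul_nonneg H.nonneg hsm.le, cos_le_one (h - μ)]
  rcases le_or_gt (4 * sin η ^ 2) (2 + 4 * √2 * sin μ * cos η) with hdisj₀ | hmeet₀
  · refine ⟨_, ?_, H.steerable_loop (by linarith) (by linarith)⟩
    linarith [H.two_mul_sub_add_le hd hμ hμ2 hη2 hμh.le hhη hdisj₀]
  rcases le_or_gt (4 * sin η ^ 2) (d ^ 2 - 4 * d * sin μ * cos η) with hdisj | hmeet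
  · exact (steerableWithin_rsl hd0 hμ hμ2 hη hη2 hcross hdisj hsin).mono (add_two_pi_le d)
  · refine (steerableWithin_rlr_of_le hd hμ hμ2 hη hη2 (by linarith) hmeet₀.le).mono ?_
    linarith

lemma mul_cos_sub_add_nonneg (hd : 0 ≤ d) (hμπ : μ ≤ π) (hη : 0 ≤ η) (hη2 : η ≤ π / 2)
    (hμη : -(π / 2) ≤ μ - η) (hcross : d * sin (μ - η) < 2 * sin η ^ 2) :
    0 ≤ d * cos (μ - η) + 2 * cos η * sin η := by
  have hsη : 0 ≤ sin η := sin_nonneg_of_nonneg_of_le_pi hη (by linarith)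
  have hcη : 0 ≤ cos η := cos_nonneg_of_neg_pi_div_two_le_of_le (by linarith) hη2
  rcases le_or_gt (μ - η) (π / 2) with hle | hgt
  · have := cos_nonneg_of_neg_pi_div_two_le_of_le hμη hle
    positivity
  have hsin : sin η ≤ sin (μ - η) := by
    rw [← sin_pi_sub (μ - η)]
    exact sin_le_sin_of_le_of_le_pi_div_two (by linarith) (by linarith) (by linarith)
  have hcos : -cos (μ - η) ≤ cos η := by
    rw [← cos_pi_sub]
    exact cos_le_cos_of_nonneg_of_le_pi hη (by linarith) (by linarith)
  have hd_le : d ≤ 2 * sin η := by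
    by_contra! hlt
    linarith [mul_le_mul hlt.le hsin hsη hd]
  have hneg := cos_nonpos_of_pi_div_two_le_of_le hgt.le (by linarith)
  linarith [mul_le_mul hd_le hcos (neg_nonneg.mpr hneg) (by positivity)]

lemma steerableWithin_of_le_sq_add (hd : √2 ≤ d) (hμ : 0 ≤ μ) (hμπ : μ ≤ π) (hη : 0 ≤ η)
    (hη2 : η ≤ π / 2) (hcross : |d * sin (μ - η)| < 2 * sin η ^ 2)
    (hdisj : 4 * sin η ^ 2 ≤ d ^ 2 + 4 * d * sin μ * cos η) :
    SteerableWithin (d + 5 * π / 2 - √2) d ↑(μ - η) ↑(μ + η) := by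
  have hd0 : 0 ≤ d := hd.trans' (by positivity)
  have hcη : 0 ≤ cos η := cos_nonneg_of_neg_pi_div_two_le_of_le (by linarith) hη2
  obtain ⟨h, ⟨hh, hh'⟩, s, H⟩ := exists_isInnerTangent hdisj (μ - η)
  rcases le_or_gt h μ with hhμ | hμh
  · exact (H.steerableWithin_loop hd0 hcη hh (by linarith) hhμ).mono (add_two_pi_le d)
  rcases le_or_gt h (μ + η) with hhη | hηh
  · exact H.steerableWithin_of_mem_Ioc hd hμ hμπ hη hη2 hcross.le ⟨hμh, hhη⟩
  have hhπ : h ≤ μ - η + π := by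
    refine H.le_sub_add_pi hh' hcross.le ?_
    exact mul_cos_sub_add_nonneg hd0 hμπ hη hη2 (by linarith) (lt_of_abs_lt hcross)
  exact (H.steerableWithin hd0 hcη hh hηh.le (by linarith)).mono (add_two_pi_le d)

end CrossTurn

section Main

variable {d μ η : ℝ}

lemma steerableWithin_sub_add_of_nonneg (hd : √2 ≤ d) (hμ : 0 ≤ μ) (hμπ : μ ≤ π) (hη : 0 ≤ η)
    (hη2 : η ≤ π / 2) : SteerableWithin (d + 5 * π / 2 - √2) d ↑(μ - η) ↑(μ + η) := by
  have hd0 : 0 < d := hd.trans_lt' (by positivity)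
  have hcη : 0 ≤ cos η := cos_nonneg_of_neg_pi_div_two_le_of_le (by linarith) hη2
  have hsμ : 0 ≤ sin μ := sin_nonneg_of_nonneg_of_le_pi hμ hμπ
  have hprod := mul_nonneg hsμ hcη
  rcases le_or_gt (2 * sin η ^ 2) |d * sin (μ - η)| with hcross | hcross
  · exact (steerableWithin_of_two_mul_sin_sq_le hd0 hμ hμπ hη (by linarith) hcross).mono
      (add_two_pi_le d)
  rcases le_or_gt (4 * sin η ^ 2) (d ^ 2 + 4 * d * sin μ * cos η) with hdisj | hmeet
  · exact steerableWithin_of_le_sq_add hd hμ hμπ hη hη2 hcross hdisj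
  refine SteerableWithin.mono (L := 5 * π / 2) ?_ (by linarith)
  rcases le_total μ (π / 2) with hμ2 | hμ2
  · have hlift := mul_le_mul_of_nonneg_right hd hprod
    refine steerableWithin_rlr_of_le hd hμ hμ2 hη hη2 ?_ ?_
    · linarith [mul_nonneg hd0.le hprod]
    · linarith [two_le_sq_of_sqrt_two_le hd]
  · exact steerableWithin_lrl_of_le hd hμ2 hμπ hη hη2 hmeet.le

lemma steerableWithin_sub_add (hd : √2 ≤ d) (hμ : |μ| ≤ π) (hη : |η| ≤ π / 2) :
    SteerableWithin (d + 5 * π / 2 - √2) d ↑(μ - η) ↑(μ + η) := by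
  have hcore := steerableWithin_sub_add_of_nonneg hd (abs_nonneg μ) hμ (abs_nonneg η) hη
  rcases abs_choice μ with hμ' | hμ' <;> rcases abs_choice η with hη' | hη' <;>
    rw [hμ', hη'] at hcore
  · exact hcore
  · simpa [sub_eq_add_neg] using hcore.reverse
  · convert hcore.reflect.reverse using 1 <;> rw [← Angle.coe_neg] <;> ring_nf
  · convert hcore.reflect using 1 <;> rw [← Angle.coe_neg] <;> ring_nf

lemma steerableWithin_of_sqrt_two_le (hd : √2 ≤ d) (α β : Angle) :
    SteerableWithin (d + 5 * π / 2 - √2) d α β := by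
  set η := (β - α).toReal / 2 with hη
  set μ := (α + η).toReal with hμ
  have hα : ((μ - η : ℝ) : Angle) = α := by
    rw [Angle.coe_sub, hμ, Angle.coe_toReal, add_sub_cancel_right]
  have hβ : ((μ + η : ℝ) : Angle) = β := by
    rw [Angle.coe_add, hμ, Angle.coe_toReal, add_assoc, ← Angle.coe_add, hη, add_halves,
      Angle.coe_toReal, add_sub_cancel]
  rw [← hα, ← hβ]
  refine steerableWithin_sub_add hd (Angle.abs_toReal_le_pi _) ?_
  rw [hη, abs_div, abs_two]
  exact div_le_div_of_nonneg_right (Angle.abs_toReal_le_pi _) zero_le_two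

end Main

/-- For every `d ≥ √2` and all angles `α, β`, there is a
bounded-curvature path from `(0, 0, α)` to `(d, 0, β)` of length at most
`d + 5π/2 - √2`. -/
theorem bcPath_length_le_beyond_sqrt_two (d : ℝ) (hd : Real.sqrt 2 ≤ d) (α β : ℝ) :
    ∃ (T : ℝ) (γ : ℝ → EuclideanSpace ℝ (Fin 2)),
      IsBCPath T 0 0 α d 0 β γ ∧ T ≤ d + 5 * π / 2 - Real.sqrt 2 := by
  obtain ⟨T, hT, hsteer⟩ := steerableWithin_of_sqrt_two_le hd α β
  obtain ⟨γ, hγ⟩ := hsteer.exists_isBCPath 0 0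
  exact ⟨T, γ, by simpa using hγ, hT⟩
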